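/- arXiv:math/0508360 — 4 statements merged into one kernel-verified Lean document; each statement's English description precedes it below -/
import Mathlib

section
/- Let E and F be real normed vector spaces and let N ≥ 2. For i = 0,…,N−1 let Sⁱ : E × F × E → ℝ be Fréchet differentiable, and let ιⁱ : E × E → F be Fréchet differentiable with D₂Sⁱ(q₀, ιⁱ(q₀,q₁), q₁) = 0 for all (q₀,q₁); define L_dⁱ(q₀,q₁) = Sⁱ(q₀, ιⁱ(q₀,q₁), q₁). Suppose q₀,…,q_N ∈ E and continuous linear functionals λ₀,…,λ_{N−2} ∈ E* satisfy, for each i, the Karush–Kuhn–Tucker stationarity conditions of the continuity-augmented discrete action ∑ᵢ Sⁱ − ∑ᵢ λᵢ(qᵢ¹ − q_{i+1}⁰): namely D₃Sⁱ(qᵢ, ιⁱ(qᵢ,q_{i+1}), q_{i+1}) = λᵢ for i = 0,…,N−2 and D₁S^{i+1}(q_{i+1}, ι^{i+1}(q_{i+1},q_{i+2}), q_{i+2}) = −λᵢ for i = 0,…,N−2. Then the nodal values satisfy the discrete Euler–Lagrange equations: D₂L_dⁱ(qᵢ, q_{i+1}) + D₁L_d^{i+1}(q_{i+1}, q_{i+2})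 = 0 for i = 0,…,N−2. -/
/-!
An envelope argument: when the discrete Lagrangian is differentiated in a nodal value, the
contribution of the internal points through the chain rule carries the factor `D₂S`, which vanishes
by stationarity. Hence `D₁L_d = D₁S` and `D₂L_d = D₃S`, and by the KKT conditions the two terms of
the discrete Euler–Lagrange equation at a node are `λ` and `-λ`.
-/

section Envelope

variable {𝕜 E F G : Type*} [NontriviallyNormedField 𝕜]
  [NormedAddCommGroup E] [NormedSpace 𝕜 E] [NormedAddCommGroup F] [NormedSpace 𝕜 F]
  [NormedAddCommGroup G] [NormedSpace 𝕜 G]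
  {f : E × F → G} {g : E → F} {a : E}

theorem fderiv_comp_graph (hf : DifferentiableAt 𝕜 f (a, g a)) (hg : DifferentiableAt 𝕜 g a) :
    fderiv 𝕜 (fun x => f (x, g x)) a =
      fderiv 𝕜 (fun x => f (x, g a)) a +
        (fderiv 𝕜 (fun y => f (a, y)) (g a)).comp (fderiv 𝕜 g a) := by
  have hD := hf.hasFDerivAt
  have total : HasFDerivAt (fun x => f (x, g x)) _ a :=
    hD.comp a ((hasFDerivAt_id a).prodMk hg.hasFDerivAt)
  have partial_fst : HasFDerivAt (fun x => f (x, g a)) _ a :=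
    hD.comp a (hasFDerivAt_prodMk_left a (g a))
  have partial_snd : HasFDerivAt (fun y => f (a, y)) _ (g a) :=
    hD.comp (g a) (hasFDerivAt_prodMk_right a (g a))
  rw [total.fderiv, partial_fst.fderiv, partial_snd.fderiv]
  ext v
  exact ((fderiv 𝕜 f (a, g a)).comp_inl_add_comp_inr (v, fderiv 𝕜 g a v)).symm

theorem fderiv_comp_graph_of_stationary
    (hf : DifferentiableAt 𝕜 f (a, g a)) (hg : DifferentiableAt 𝕜 g a)
    (hstat : fderiv 𝕜 (fun y => f (a, y)) (g a) = 0) :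
    fderiv 𝕜 (fun x => f (x, g x)) a = fderiv 𝕜 (fun x => f (x, g a)) a := by
  rw [fderiv_comp_graph hf hg, hstat, ContinuousLinearMap.zero_comp, add_zero]

end Envelope

/-- The discrete Lagrangian `L_d (q₀, q₁) = S (q₀, ι (q₀, q₁), q₁)` of a one-interval action `S`,
with the internal control points chosen by `ι`. Stationarity of `S` at these points is not part of
the definition. -/
def discreteLagrangian {E₀ F E₁ G : Type*} (S : E₀ × F × E₁ → G) (ι : E₀ × E₁ → F)
    (p : E₀ × E₁) : G :=
  S (p.1, ι p, p.2)

section DiscreteLagrangian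

variable {𝕜 E₀ E₁ F G : Type*} [NontriviallyNormedField 𝕜]
  [NormedAddCommGroup E₀] [NormedSpace 𝕜 E₀] [NormedAddCommGroup E₁] [NormedSpace 𝕜 E₁]
  [NormedAddCommGroup F] [NormedSpace 𝕜 F] [NormedAddCommGroup G] [NormedSpace 𝕜 G]
  {S : E₀ × F × E₁ → G} {ι : E₀ × E₁ → F} {q₀ : E₀} {q₁ : E₁}

theorem fderiv_discreteLagrangian_left
    (hS : DifferentiableAt 𝕜 S (q₀, ι (q₀, q₁), q₁))
    (hι : DifferentiableAt 𝕜 (fun x => ι (x, q₁)) q₀)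
    (hstat : fderiv 𝕜 (fun y => S (q₀, y, q₁)) (ι (q₀, q₁)) = 0) :
    fderiv 𝕜 (fun x => discreteLagrangian S ι (x, q₁)) q₀ =
      fderiv 𝕜 (fun x => S (x, ι (q₀, q₁), q₁)) q₀ :=
  fderiv_comp_graph_of_stationary (f := fun p : E₀ × F => S (p.1, p.2, q₁))
    (g := fun x => ι (x, q₁)) (by fun_prop) hι hstat

theorem fderiv_discreteLagrangian_right
    (hS : DifferentiableAt 𝕜 S (q₀, ι (q₀, q₁), q₁))
    (hι : DifferentiableAt 𝕜 (fun x => ι (q₀, x)) q₁)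
    (hstat : fderiv 𝕜 (fun y => S (q₀, y, q₁)) (ι (q₀, q₁)) = 0) :
    fderiv 𝕜 (fun x => discreteLagrangian S ι (q₀, x)) q₁ =
      fderiv 𝕜 (fun x => S (q₀, ι (q₀, q₁), x)) q₁ :=
  fderiv_comp_graph_of_stationary (f := fun p : E₁ × F => S (q₀, p.2, p.1))
    (g := fun x => ι (q₀, x)) (by fun_prop) hι hstat

end DiscreteLagrangian

/-- The equations are local: each involves a single interior node `q₁` and the two intervals meeting
there. -/
theorem kkt_implies_discrete_euler_lagrange_general
    {𝕜 E₀ E₁ E₂ F F' G : Type*} [NontriviallyNormedField 𝕜]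
    [NormedAddCommGroup E₀] [NormedSpace 𝕜 E₀] [NormedAddCommGroup E₁] [NormedSpace 𝕜 E₁]
    [NormedAddCommGroup E₂] [NormedSpace 𝕜 E₂] [NormedAddCommGroup F] [NormedSpace 𝕜 F]
    [NormedAddCommGroup F'] [NormedSpace 𝕜 F'] [NormedAddCommGroup G] [NormedSpace 𝕜 G]
    {S : E₀ × F × E₁ → G} {ι : E₀ × E₁ → F} {T : E₁ × F' × E₂ → G} {κ : E₁ × E₂ → F'}
    {q₀ : E₀} {q₁ : E₁} {q₂ : E₂} {lam : E₁ →L[𝕜] G}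
    (hS : DifferentiableAt 𝕜 S (q₀, ι (q₀, q₁), q₁))
    (hT : DifferentiableAt 𝕜 T (q₁, κ (q₁, q₂), q₂))
    (hι : DifferentiableAt 𝕜 (fun x => ι (q₀, x)) q₁)
    (hκ : DifferentiableAt 𝕜 (fun x => κ (x, q₂)) q₁)
    (hstatS : fderiv 𝕜 (fun y => S (q₀, y, q₁)) (ι (q₀, q₁)) = 0)
    (hstatT : fderiv 𝕜 (fun y => T (q₁, y, q₂)) (κ (q₁, q₂)) = 0)
    (hKKT₁ : fderiv 𝕜 (fun x => S (q₀, ι (q₀, q₁), x)) q₁ = lam)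
    (hKKT₂ : fderiv 𝕜 (fun x => T (x, κ (q₁, q₂), q₂)) q₁ = -lam) :
    fderiv 𝕜 (fun x => discreteLagrangian S ι (q₀, x)) q₁ +
      fderiv 𝕜 (fun x => discreteLagrangian T κ (x, q₂)) q₁ = 0 := by
  rw [fderiv_discreteLagrangian_right hS hι hstatS, fderiv_discreteLagrangian_left hT hκ hstatT,
    hKKT₁, hKKT₂, add_neg_cancel]

/-- The Karush–Kuhn–Tucker stationarity conditions of the continuity-augmented discrete
action imply the discrete Euler–Lagrange equations for the discrete Lagrangians
`L_dⁱ (q₀, q₁) = Sⁱ (q₀, ιⁱ (q₀, q₁), q₁)`. -/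
theorem kkt_implies_discrete_euler_lagrange
    {E F : Type*} [NormedAddCommGroup E] [NormedSpace ℝ E]
    [NormedAddCommGroup F] [NormedSpace ℝ F]
    (N : ℕ) (hN : 2 ≤ N)
    (S : ℕ → E × F × E → ℝ) (hS : ∀ i, i < N → Differentiable ℝ (S i))
    (ι : ℕ → E × E → F) (hι : ∀ i, i < N → Differentiable ℝ (ι i))
    (hcrit : ∀ i, i < N → ∀ q₀ q₁ : E,
      fderiv ℝ (fun y => S i (q₀, y, q₁)) (ι i (q₀, q₁)) = 0)
    (q : ℕ → E) (lam : ℕ → E →L[ℝ] ℝ)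
    (hKKT₁ : ∀ i, i + 2 ≤ N →
      fderiv ℝ (fun x => S i (q i, ι i (q i, q (i + 1)), x)) (q (i + 1)) = lam i)
    (hKKT₂ : ∀ i, i + 2 ≤ N →
      fderiv ℝ (fun x => S (i + 1) (x, ι (i + 1) (q (i + 1), q (i + 2)), q (i + 2)))
        (q (i + 1)) = -lam i) :
    ∀ i, i + 2 ≤ N →
      fderiv ℝ (fun x => S i (q i, ι i (q i, x), x)) (q (i + 1))
        + fderiv ℝ (fun x => S (i + 1) (x, ι (i + 1) (x, q (i + 2)), q (i + 2)))
            (q (i + 1)) = 0 := by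
  intro i hi
  have hi₀ : i < N := by lia
  have hi₁ : i + 1 < N := by lia
  exact kkt_implies_discrete_euler_lagrange_general (hS i hi₀ _) (hS (i + 1) hi₁ _)
    ((hι i hi₀ _).comp _ (hasFDerivAt_prodMk_right _ _).differentiableAt)
    ((hι (i + 1) hi₁ _).comp _ (hasFDerivAt_prodMk_left _ _).differentiableAt)
    (hcrit i hi₀ _ _) (hcrit (i + 1) hi₁ _ _) (hKKT₁ i hi) (hKKT₂ i hi)
end

section
/- Let E be a real normed vector space, let L_d : E × E → ℝ be Fréchet differentiable, let n ≥ 2, and define the discrete action sum S_d : E^{n+1} → ℝ by S_d(q₀,…,q_n) = ∑_{i=0}^{n−1} L_d(qᵢ, q_{i+1}). Then for each interior index 1 ≤ i ≤ n−1, the Fréchet partial derivative of S_d with respect to qᵢ equals D₂L_d(q_{i−1}, qᵢ) + D₁L_d(qᵢ, q_{i+1}). Consequently, (q₀,…,q_n) is a critical point of S_d with respect to all variations that fix the endpoints q₀ and q_n if and only if the discrete Euler–Lagrange equations D₂L_d(q_{i−1}, qᵢ) + D₁L_d(qᵢ, q_{i+1}) = 0 hold for all i = 1,…,n−1. -/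
/-!
Differentiating `S_d` along any differentiable family of discrete paths with stationary endpoints
and summing by parts pairs the velocity of each interior point `qᵢ` with
`D₂L_d (q_{i-1}, qᵢ) + D₁L_d (qᵢ, q_{i+1})`. Moving the single point `qᵢ` gives the partial
derivatives of `S_d`; the affine families `q + ε • δ` give its variations, and variations `δ`
supported at one interior point isolate one Euler–Lagrange equation each.
-/

open Finset

theorem sum_range_add_succ_eq_sum_Ioo {M : Type*} [AddCommMonoid M] {a b : ℕ → M} {n : ℕ}
    (ha : a 0 = 0) (hb : b n = 0) :
    ∑ j ∈ range n, (a j + b (j + 1)) = ∑ i ∈ Ioo 0 n, (b i + a i) := by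
  cases n with
  | zero => simp
  | succ m =>
    have ha_shift : ∑ j ∈ range (m + 1), a j = ∑ j ∈ range m, a (j + 1) := by
      rw [sum_range_succ', ha, add_zero]
    have hb_last : ∑ j ∈ range (m + 1), b (j + 1) = ∑ j ∈ range m, b (j + 1) := by
      rw [sum_range_succ, hb, add_zero]
    have h_interior : ∑ i ∈ Ioo 0 (m + 1), (b i + a i) =
        ∑ j ∈ range m, (b (j + 1) + a (j + 1)) := by
      rw [← Ico_add_one_left_eq_Ioo, range_eq_Ico, sum_Ico_add' (fun i => b i + a i)]
    rw [sum_add_distrib, ha_shift, hb_last, h_interior, sum_add_distrib, add_comm]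

section Calculus

variable {𝕜 E E₁ E₂ F : Type*} [NontriviallyNormedField 𝕜]
  [NormedAddCommGroup E] [NormedSpace 𝕜 E] [NormedAddCommGroup E₁] [NormedSpace 𝕜 E₁]
  [NormedAddCommGroup E₂] [NormedSpace 𝕜 E₂] [NormedAddCommGroup F] [NormedSpace 𝕜 F]

theorem fderiv_eq_coprod_partial {f : E₁ × E₂ → F} {x : E₁} {y : E₂}
    (hf : DifferentiableAt 𝕜 f (x, y)) :
    fderiv 𝕜 f (x, y) =
      (fderiv 𝕜 (fun u => f (u, y)) x).coprod (fderiv 𝕜 (fun v => f (x, v)) y) := by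
  have h_fst : fderiv 𝕜 (fun u => f (u, y)) x = (fderiv 𝕜 f (x, y)).comp (.inl 𝕜 E₁ E₂) :=
    (hf.hasFDerivAt.comp x (hasFDerivAt_prodMk_left x y)).fderiv
  have h_snd : fderiv 𝕜 (fun v => f (x, v)) y = (fderiv 𝕜 f (x, y)).comp (.inr 𝕜 E₁ E₂) :=
    (hf.hasFDerivAt.comp y (hasFDerivAt_prodMk_right x y)).fderiv
  rw [h_fst, h_snd, ContinuousLinearMap.coprod_comp_inl_inr]

theorem hasFDerivAt_update_apply {ι : Type*} [DecidableEq ι] (q : ι → E) (i j : ι) (x : E) :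
    HasFDerivAt (fun y => Function.update q i y j)
      (Pi.single (M := fun _ => E →L[𝕜] E) i (.id 𝕜 E) j) x := by
  rcases eq_or_ne j i with rfl | hji
  · simp only [Function.update_self, Pi.single_eq_same]
    exact hasFDerivAt_id x
  · simp only [Function.update_of_ne hji, Pi.single_eq_of_ne hji]
    exact hasFDerivAt_const (q j) x

theorem hasFDerivAt_add_smul_const (a b : E) (t : 𝕜) :
    HasFDerivAt (fun ε : 𝕜 => a + ε • b) (.toSpanSingleton 𝕜 b) t :=
  (ContinuousLinearMap.toSpanSingleton 𝕜 b).hasFDerivAt.const_add a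

end Calculus

/-- The discrete action sum `S_d (q₀, …, q_n)` of the discrete Lagrangian `L`. A discrete path is
encoded as a sequence `q : ℕ → E`, of which only the first `n + 1` terms matter. -/
def discreteAction {E F : Type*} [AddCommMonoid F] (L : E × E → F) (n : ℕ) (q : ℕ → E) : F :=
  ∑ j ∈ range n, L (q j, q (j + 1))

section FirstVariation

variable {𝕜 E F G : Type*} [NontriviallyNormedField 𝕜]
  [NormedAddCommGroup E] [NormedSpace 𝕜 E] [NormedAddCommGroup F] [NormedSpace 𝕜 F]
  [NormedAddCommGroup G] [NormedSpace 𝕜 G]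

variable (𝕜) in
/-- The left-hand side `D₂L (q_{i-1}, qᵢ) + D₁L (qᵢ, q_{i+1})` of the discrete Euler–Lagrange
equation at the index `i`. It is meaningful for `1 ≤ i` only, since `0 - 1 = 0` in `ℕ`. -/
noncomputable def discreteEulerLagrange (L : E × E → F) (q : ℕ → E) (i : ℕ) : E →L[𝕜] F :=
  fderiv 𝕜 (fun x => L (q (i - 1), x)) (q i) + fderiv 𝕜 (fun x => L (x, q (i + 1))) (q i)

variable {L : E × E → F} {n : ℕ} {q : ℕ → E}

theorem hasFDerivAt_discreteAction_comp {c : G → ℕ → E} {c' : ℕ → G →L[𝕜] E} {x : G}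
    (hL : ∀ j < n, DifferentiableAt 𝕜 L (c x j, c x (j + 1)))
    (hc : ∀ j, HasFDerivAt (fun y => c y j) (c' j) x) (hc_zero : c' 0 = 0) (hc_last : c' n = 0) :
    HasFDerivAt (fun y => discreteAction L n (c y))
      (∑ i ∈ Ioo 0 n, (discreteEulerLagrange 𝕜 L (c x) i).comp (c' i)) x := by
  let D₁ (j : ℕ) : E →L[𝕜] F := fderiv 𝕜 (fun u => L (u, c x (j + 1))) (c x j)
  let D₂ (j : ℕ) : E →L[𝕜] F := fderiv 𝕜 (fun v => L (c x (j - 1), v)) (c x j)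
  have h_term : ∀ j ∈ range n, HasFDerivAt (fun y => L (c y j, c y (j + 1)))
      ((D₁ j).comp (c' j) + (D₂ (j + 1)).comp (c' (j + 1))) x := by
    intro j hj
    have hLj := hL j (mem_range.1 hj)
    have h_chain := hLj.hasFDerivAt.comp x ((hc j).prodMk (hc (j + 1)))
    rwa [fderiv_eq_coprod_partial hLj] at h_chain
  have h_parts := sum_range_add_succ_eq_sum_Ioo (n := n)
    (a := fun j => (D₁ j).comp (c' j)) (b := fun j => (D₂ j).comp (c' j))
    (by simp only [hc_zero, ContinuousLinearMap.comp_zero])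
    (by simp only [hc_last, ContinuousLinearMap.comp_zero])
  simp only [discreteEulerLagrange, ContinuousLinearMap.add_comp]
  exact h_parts ▸ HasFDerivAt.fun_sum h_term

theorem hasFDerivAt_discreteAction_update
    (hL : ∀ j < n, DifferentiableAt 𝕜 L (q j, q (j + 1))) {i : ℕ} (hi : i ∈ Ioo 0 n) :
    HasFDerivAt (fun x => discreteAction L n (Function.update q i x))
      (discreteEulerLagrange 𝕜 L q i) (q i) := by
  obtain ⟨hi_pos, hi_lt⟩ := mem_Ioo.1 hi
  have h_var := hasFDerivAt_discreteAction_comp (by simpa only [Function.update_eq_self] using hL)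
    (fun j => hasFDerivAt_update_apply (𝕜 := 𝕜) q i j (q i))
    (Pi.single_eq_of_ne hi_pos.ne _) (Pi.single_eq_of_ne hi_lt.ne' _)
  have h_sum : ∑ j ∈ Ioo 0 n, (discreteEulerLagrange 𝕜 L q j).comp
      (Pi.single (M := fun _ => E →L[𝕜] E) i (.id 𝕜 E) j) = discreteEulerLagrange 𝕜 L q i := by
    rw [sum_eq_single_of_mem i hi fun j _ hji => by
      rw [Pi.single_eq_of_ne hji, ContinuousLinearMap.comp_zero]]
    rw [Pi.single_eq_same, ContinuousLinearMap.comp_id]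
  rwa [Function.update_eq_self, h_sum] at h_var

theorem hasDerivAt_discreteAction_add_smul
    (hL : ∀ j < n, DifferentiableAt 𝕜 L (q j, q (j + 1))) {δ : ℕ → E}
    (hδ_zero : δ 0 = 0) (hδ_last : δ n = 0) :
    HasDerivAt (fun ε : 𝕜 => discreteAction L n (q + ε • δ))
      (∑ i ∈ Ioo 0 n, discreteEulerLagrange 𝕜 L q i (δ i)) 0 := by
  have h_var := hasFDerivAt_discreteAction_comp (c := fun ε : 𝕜 => q + ε • δ)
    (by simpa only [zero_smul, add_zero] using hL)
    (fun j => hasFDerivAt_add_smul_const (q j) (δ j) 0)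
    (by rw [hδ_zero, ContinuousLinearMap.toSpanSingleton_zero])
    (by rw [hδ_last, ContinuousLinearMap.toSpanSingleton_zero])
  simpa using h_var.hasDerivAt

theorem forall_deriv_discreteAction_eq_zero_iff
    (hL : ∀ j < n, DifferentiableAt 𝕜 L (q j, q (j + 1))) :
    (∀ δ : ℕ → E, δ 0 = 0 → δ n = 0 →
        deriv (fun ε : 𝕜 => discreteAction L n (q + ε • δ)) 0 = 0) ↔
      ∀ i ∈ Ioo 0 n, discreteEulerLagrange 𝕜 L q i = 0 := by
  constructor
  · intro h_stationary i hi
    obtain ⟨hi_pos, hi_lt⟩ := mem_Ioo.1 hi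
    ext v
    let δ : ℕ → E := Pi.single i v
    have hδ_self : δ i = v := Pi.single_eq_same (M := fun _ => E) i v
    have hδ_of_ne : ∀ {j}, j ≠ i → δ j = 0 := fun hji =>
      Pi.single_eq_of_ne (M := fun _ => E) hji v
    have hδ_zero : δ 0 = 0 := hδ_of_ne hi_pos.ne
    have hδ_last : δ n = 0 := hδ_of_ne hi_lt.ne'
    calc discreteEulerLagrange 𝕜 L q i v
        = ∑ j ∈ Ioo 0 n, discreteEulerLagrange 𝕜 L q j (δ j) := by
          rw [sum_eq_single_of_mem i hi fun j _ hji => by rw [hδ_of_ne hji, map_zero], hδ_self]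
      _ = deriv (fun ε : 𝕜 => discreteAction L n (q + ε • δ)) 0 :=
          (hasDerivAt_discreteAction_add_smul hL hδ_zero hδ_last).deriv.symm
      _ = 0 := h_stationary δ hδ_zero hδ_last
  · intro h_euler δ hδ_zero hδ_last
    rw [(hasDerivAt_discreteAction_add_smul hL hδ_zero hδ_last).deriv]
    exact sum_eq_zero fun i hi => by rw [h_euler i hi, zero_apply]

theorem discrete_euler_lagrange_characterization_general
    (hL : ∀ j < n, DifferentiableAt 𝕜 L (q j, q (j + 1))) :
    (∀ i ∈ Ioo 0 n, fderiv 𝕜 (fun x => discreteAction L n (Function.update q i x)) (q i) =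
        discreteEulerLagrange 𝕜 L q i) ∧
      ((∀ δ : ℕ → E, δ 0 = 0 → δ n = 0 →
          deriv (fun ε : 𝕜 => discreteAction L n (q + ε • δ)) 0 = 0) ↔
        ∀ i ∈ Ioo 0 n, discreteEulerLagrange 𝕜 L q i = 0) :=
  ⟨fun _ hi => (hasFDerivAt_discreteAction_update hL hi).fderiv,
    forall_deriv_discreteAction_eq_zero_iff hL⟩

end FirstVariation

/-- For the discrete action sum `S_d (q₀, …, q_n) = ∑_{i=0}^{n-1} L_d (qᵢ, q_{i+1})`, the
partial derivative with respect to an interior point `qᵢ` equals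
`D₂L_d (q_{i-1}, qᵢ) + D₁L_d (qᵢ, q_{i+1})`; consequently the discrete action sum is
stationary with respect to all variations fixing the endpoints if and only if the discrete
Euler–Lagrange equations hold at every interior index. -/
theorem discrete_euler_lagrange_characterization
    {E : Type*} [NormedAddCommGroup E] [NormedSpace ℝ E]
    (Ld : E × E → ℝ) (hLd : Differentiable ℝ Ld)
    (n : ℕ) (hn : 2 ≤ n) (q : ℕ → E) :
    (∀ i, 1 ≤ i → i ≤ n - 1 →
      fderiv ℝ (fun x => ∑ j ∈ Finset.range n,
          Ld (Function.update q i x j, Function.update q i x (j + 1))) (q i)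
        = fderiv ℝ (fun x => Ld (q (i - 1), x)) (q i)
          + fderiv ℝ (fun x => Ld (x, q (i + 1))) (q i)) ∧
    ((∀ δ : ℕ → E, δ 0 = 0 → δ n = 0 →
        deriv (fun ε : ℝ => ∑ j ∈ Finset.range n,
          Ld (q j + ε • δ j, q (j + 1) + ε • δ (j + 1))) 0 = 0) ↔
      (∀ i, 1 ≤ i → i ≤ n - 1 →
        fderiv ℝ (fun x => Ld (q (i - 1), x)) (q i)
          + fderiv ℝ (fun x => Ld (x, q (i + 1))) (q i) = 0)) := by
  simpa only [mem_Ioo, and_imp, Nat.le_sub_one_iff_lt (zero_lt_two.trans_le hn)] using!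
    discrete_euler_lagrange_characterization_general fun j _ => hLd (q j, q (j + 1))
end

section
/- Let ħ > 0 and m > 0 be real constants, let Ω ⊆ ℝ³ be open, let I ⊆ ℝ be an open interval, let V : ℝ³ → ℝ be continuous, and let ψ : ℝ × ℝ³ → ℂ be twice continuously differentiable on I × Ω. Suppose that the first variation of the Schrödinger action with respect to the conjugate field vanishes for all compactly supported variations: for every smooth η : ℝ × ℝ³ → ℂ with compact support contained in I × Ω, ∫∫ [ (iħ/2)·( ∂ₜψ(t,x)·conj(η(t,x)) − ψ(t,x)·∂ₜ(conj η)(t,x) ) − (ħ²/(2m))·∑_{k=1}^{3} ∂ₖψ(t,x)·∂ₖ(conj η)(t,x) − V(x)·ψ(t,x)·conj(η(t,x)) ] dx dt = 0, where ∂ₖ denotes the partial derivative in the k-th spatial coordinate. Then ψ satisfies the linear Schrödinger equation on I × Ω: iħ·∂ₜψ(t,x) = −(ħ²/(2m))·∑_{k=1}^{3} ∂ₖ∂ₖψ(t,x) + V(x)·ψ(t,x). -/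
open MeasureTheory

/-- The time partial derivative `∂ₜψ`. -/
noncomputable def timeDeriv (ψ : ℝ × (Fin 3 → ℝ) → ℂ) (p : ℝ × (Fin 3 → ℝ)) : ℂ :=
  deriv (fun s => ψ (s, p.2)) p.1

/-- The `k`-th spatial partial derivative `∂ₖψ`. -/
noncomputable def spaceDeriv (k : Fin 3) (ψ : ℝ × (Fin 3 → ℝ) → ℂ)
    (p : ℝ × (Fin 3 → ℝ)) : ℂ :=
  deriv (fun u => ψ (p.1, Function.update p.2 k u)) (p.2 k)

/-!
The integrand of the first variation has the form `f η + ∑ i, g i · ∂ᵢη`, where `f = ∂𝓛/∂ψ̄` and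
`g i = ∂𝓛/∂(∂ᵢψ̄)`. Integrating by parts moves the derivatives onto the `g i`, so `f - ∑ i, ∂ᵢ(g i)`
integrates to zero against every test function. Being continuous, it vanishes identically: this is
the Euler–Lagrange equation `∂𝓛/∂ψ̄ = ∑ i, ∂ᵢ(∂𝓛/∂(∂ᵢψ̄))`. For the Schrödinger Lagrangian each side
contributes one half of the term `iħ ∂ₜψ`.
-/

open scoped ContDiff

theorem integrable_smul_of_continuousOn {X F : Type*} [TopologicalSpace X] [MeasurableSpace X]
    [OpensMeasurableSpace X] [NormedAddCommGroup F] [NormedSpace ℝ F] {μ : Measure X}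
    [IsFiniteMeasureOnCompacts μ] {U : Set X} (hU : IsOpen U) {f : X → F} (hf : ContinuousOn f U)
    {η : X → ℝ} (hη : Continuous η) (hη_compact : HasCompactSupport η) (hηU : tsupport η ⊆ U) :
    Integrable (fun x => η x • f x) μ := by
  have hcont : Continuous fun x => η x • f x := by
    refine continuous_of_tsupport fun x hx => ?_
    have hxU : x ∈ U := hηU (tsupport_smul_subset_left η f hx)
    exact hη.continuousAt.smul (hf.continuousAt (hU.mem_nhds hxU))
  exact hcont.integrable_of_hasCompactSupport hη_compact.smul_right

section EulerLagrange

variable {E F : Type*} [NormedAddCommGroup E] [NormedSpace ℝ E] [NormedAddCommGroup F]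
  [NormedSpace ℝ F] {U : Set E}

theorem continuousOn_fderiv_apply (hU : IsOpen U) {g : E → F} (hg : ContDiffOn ℝ 1 g U) (v : E) :
    ContinuousOn (fun x => fderiv ℝ g x v) U :=
  (hg.continuousOn_fderiv_of_isOpen hU le_rfl).clm_apply continuousOn_const

variable [MeasurableSpace E] [BorelSpace E] {μ : Measure E}

theorem integrable_fderiv_smul_of_continuousOn [IsFiniteMeasureOnCompacts μ] (hU : IsOpen U)
    {g : E → F} (hg : ContinuousOn g U) {η : E → ℝ} (hη : ContDiff ℝ 1 η)
    (hη_compact : HasCompactSupport η) (hηU : tsupport η ⊆ U) (v : E) :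
    Integrable (fun x => fderiv ℝ η x v • g x) μ :=
  integrable_smul_of_continuousOn hU hg
    ((hη.continuous_fderiv one_ne_zero).clm_apply continuous_const)
    (hη_compact.fderiv_apply ℝ v) ((tsupport_fderiv_apply_subset ℝ v).trans hηU)

variable [FiniteDimensional ℝ E]

theorem eqOn_zero_of_integral_contDiff_smul_eq_zero [CompleteSpace F]
    [IsLocallyFiniteMeasure μ] [μ.IsOpenPosMeasure] (hU : IsOpen U)
    {f : E → F} (hf : ContinuousOn f U)
    (h : ∀ η : E → ℝ, ContDiff ℝ ∞ η → HasCompactSupport η → tsupport η ⊆ U →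
      ∫ x, η x • f x ∂μ = 0) :
    Set.EqOn f 0 U := by
  have hae : ∀ᵐ x ∂μ, x ∈ U → f x = 0 :=
    hU.ae_eq_zero_of_integral_contDiff_smul_eq_zero (hf.locallyIntegrableOn hU.measurableSet) h
  exact Measure.eqOn_open_of_ae_eq ((ae_restrict_iff' hU.measurableSet).2 hae) hU hf
    continuousOn_const

variable [μ.IsAddHaarMeasure]

theorem integral_smul_fderiv_eq_neg_of_tsupport_subset (hU : IsOpen U)
    {g : E → F} (hg : ContDiffOn ℝ 1 g U) {η : E → ℝ} (hη : ContDiff ℝ 1 η)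
    (hη_compact : HasCompactSupport η) (hηU : tsupport η ⊆ U) (v : E) :
    ∫ x, η x • fderiv ℝ g x v ∂μ = -∫ x, fderiv ℝ η x v • g x ∂μ :=
  integral_smul_fderiv_eq_neg_fderiv_smul_of_integrable
    (integrable_fderiv_smul_of_continuousOn hU hg.continuousOn hη hη_compact hηU v)
    (integrable_smul_of_continuousOn hU (continuousOn_fderiv_apply hU hg v) hη.continuous
      hη_compact hηU)
    (integrable_smul_of_continuousOn hU hg.continuousOn hη.continuous hη_compact hηU)
    (fun _ _ => (hη.differentiable one_ne_zero).differentiableAt)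
    (fun _ hx => (hg.differentiableOn one_ne_zero).differentiableAt (hU.mem_nhds (hηU hx)))

theorem eqOn_sum_fderiv_of_integral_eq_zero [CompleteSpace F] (hU : IsOpen U)
    {ι : Type*} [Fintype ι] {f : E → F} (hf : ContinuousOn f U)
    {g : ι → E → F} (hg : ∀ i, ContDiffOn ℝ 1 (g i) U) (v : ι → E)
    (h : ∀ η : E → ℝ, ContDiff ℝ ∞ η → HasCompactSupport η → tsupport η ⊆ U →
      ∫ x, (η x • f x + ∑ i, fderiv ℝ η x (v i) • g i x) ∂μ = 0) :
    Set.EqOn f (fun x => ∑ i, fderiv ℝ (g i) x (v i)) U := by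
  have hdiv (i : ι) : ContinuousOn (fun x => fderiv ℝ (g i) x (v i)) U :=
    continuousOn_fderiv_apply hU (hg i) (v i)
  suffices hzero : Set.EqOn (fun x => f x - ∑ i, fderiv ℝ (g i) x (v i)) 0 U from
    fun x hx => sub_eq_zero.1 (hzero hx)
  refine eqOn_zero_of_integral_contDiff_smul_eq_zero (μ := μ) hU
    (hf.sub (continuousOn_finsetSum _ fun i _ => hdiv i)) fun η hη hη_compact hηU => ?_
  have hη₁ : ContDiff ℝ 1 η := hη.of_le (by simp)
  have hηf : Integrable (fun x => η x • f x) μ :=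
    integrable_smul_of_continuousOn hU hf hη.continuous hη_compact hηU
  have hηg (i : ι) : Integrable (fun x => η x • fderiv ℝ (g i) x (v i)) μ :=
    integrable_smul_of_continuousOn hU (hdiv i) hη.continuous hη_compact hηU
  have hη'g (i : ι) : Integrable (fun x => fderiv ℝ η x (v i) • g i x) μ :=
    integrable_fderiv_smul_of_continuousOn hU (hg i).continuousOn hη₁ hη_compact hηU (v i)
  calc ∫ x, η x • (f x - ∑ i, fderiv ℝ (g i) x (v i)) ∂μ
      = ∫ x, η x • f x ∂μ - ∑ i, ∫ x, η x • fderiv ℝ (g i) x (v i) ∂μ := by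
        simp_rw [smul_sub, Finset.smul_sum]
        rw [integral_sub hηf (integrable_finsetSum _ fun i _ => hηg i),
          integral_finsetSum _ fun i _ => hηg i]
    _ = ∫ x, η x • f x ∂μ + ∑ i, ∫ x, fderiv ℝ η x (v i) • g i x ∂μ := by
        simp_rw [integral_smul_fderiv_eq_neg_of_tsupport_subset hU (hg _) hη₁ hη_compact hηU,
          Finset.sum_neg_distrib, sub_neg_eq_add]
    _ = ∫ x, (η x • f x + ∑ i, fderiv ℝ η x (v i) • g i x) ∂μ := by
        rw [integral_add hηf (integrable_finsetSum _ fun i _ => hη'g i),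
          integral_finsetSum _ fun i _ => hη'g i]
    _ = 0 := h η hη hη_compact hηU

end EulerLagrange

section PartialDerivatives

variable {ψ : ℝ × (Fin 3 → ℝ) → ℂ} {p : ℝ × (Fin 3 → ℝ)} {U : Set (ℝ × (Fin 3 → ℝ))} {n : ℕ∞ω}

/-- The coordinate directions of space-time: `none` is the time direction and `some k` is the
direction of the `k`-th spatial coordinate. Along them `fderiv` gives `timeDeriv` and
`spaceDeriv k`. -/
def coordDirection : Option (Fin 3) → ℝ × (Fin 3 → ℝ)
  | none => (1, 0)
  | some k => (0, Pi.single k 1)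

theorem timeDeriv_eq_fderiv (hψ : DifferentiableAt ℝ ψ p) :
    timeDeriv ψ p = fderiv ℝ ψ p (coordDirection none) := by
  have hline : HasDerivAt (fun s => (s, p.2)) (coordDirection none) p.1 :=
    (hasDerivAt_id p.1).prodMk (hasDerivAt_const p.1 p.2)
  exact (hψ.hasFDerivAt.comp_hasDerivAt p.1 hline).deriv

theorem spaceDeriv_eq_fderiv (k : Fin 3) (hψ : DifferentiableAt ℝ ψ p) :
    spaceDeriv k ψ p = fderiv ℝ ψ p (coordDirection (some k)) := by
  have hline : HasDerivAt (fun u => (p.1, Function.update p.2 k u)) (coordDirection (some k))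
      (p.2 k) :=
    (hasDerivAt_const (p.2 k) p.1).prodMk (hasDerivAt_update p.2 k (p.2 k))
  exact (hψ.hasFDerivAt.comp_hasDerivAt_of_eq (p.2 k) hline (by simp)).deriv

theorem contDiffOn_timeDeriv (hU : IsOpen U) (hψ : ContDiffOn ℝ (n + 1) ψ U) :
    ContDiffOn ℝ n (timeDeriv ψ) U :=
  ((hψ.fderiv_of_isOpen hU le_rfl).clm_apply contDiffOn_const).congr fun _ hp =>
    timeDeriv_eq_fderiv ((hψ.differentiableOn (by simp)).differentiableAt (hU.mem_nhds hp))

theorem contDiffOn_spaceDeriv (k : Fin 3) (hU : IsOpen U) (hψ : ContDiffOn ℝ (n + 1) ψ U) :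
    ContDiffOn ℝ n (spaceDeriv k ψ) U :=
  ((hψ.fderiv_of_isOpen hU le_rfl).clm_apply contDiffOn_const).congr fun _ hp =>
    spaceDeriv_eq_fderiv k ((hψ.differentiableOn (by simp)).differentiableAt (hU.mem_nhds hp))

theorem fderiv_ofReal_apply {E : Type*} [NormedAddCommGroup E] [NormedSpace ℝ E] {η : E → ℝ}
    {x : E} (hη : DifferentiableAt ℝ η x) (v : E) :
    fderiv ℝ (fun y => (η y : ℂ)) x v = (fderiv ℝ η x v : ℂ) :=
  DFunLike.congr_fun (Complex.ofRealCLM.hasFDerivAt.comp x hη.hasFDerivAt).fderiv v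

end PartialDerivatives

section Schrodinger

variable {α κ : ℂ} {ψ W : ℝ × (Fin 3 → ℝ) → ℂ} {U : Set (ℝ × (Fin 3 → ℝ))}

/-- The derivatives `∂𝓛/∂(∂ₜψ̄)` (at `none`) and `∂𝓛/∂(∂ₖψ̄)` (at `some k`) of the Lagrangian
density `𝓛 = (α/2)(∂ₜψ ψ̄ - ψ ∂ₜψ̄) - κ ∇ψ·∇ψ̄ - W ψ ψ̄`, which is that of the Schrödinger action
for `α = iħ` and `κ = ħ²/(2m)`. Their divergence is one side of the Euler–Lagrange equation. -/
noncomputable def conjMomentum (α κ : ℂ) (ψ : ℝ × (Fin 3 → ℝ) → ℂ) :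
    Option (Fin 3) → ℝ × (Fin 3 → ℝ) → ℂ
  | none => fun p => -(α / 2) * ψ p
  | some k => fun p => -κ * spaceDeriv k ψ p

theorem contDiffOn_conjMomentum (hU : IsOpen U) (hψ : ContDiffOn ℝ 2 ψ U) :
    ∀ i, ContDiffOn ℝ 1 (conjMomentum α κ ψ i) U
  | none => contDiffOn_const.mul (hψ.of_le one_le_two)
  | some k => contDiffOn_const.mul (contDiffOn_spaceDeriv k hU hψ)

theorem sum_fderiv_conjMomentum (hU : IsOpen U) (hψ : ContDiffOn ℝ 2 ψ U)
    {p : ℝ × (Fin 3 → ℝ)} (hp : p ∈ U) :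
    ∑ i, fderiv ℝ (conjMomentum α κ ψ i) p (coordDirection i)
      = -(α / 2) * timeDeriv ψ p - κ * ∑ k, spaceDeriv k (spaceDeriv k ψ) p := by
  have hψp : DifferentiableAt ℝ ψ p :=
    (hψ.differentiableOn two_ne_zero).differentiableAt (hU.mem_nhds hp)
  have hψp' (k : Fin 3) : DifferentiableAt ℝ (spaceDeriv k ψ) p :=
    ((contDiffOn_spaceDeriv (n := 1) k hU hψ).differentiableOn one_ne_zero).differentiableAt
      (hU.mem_nhds hp)
  simp only [Fintype.sum_option, conjMomentum, fderiv_const_mul hψp, fderiv_const_mul (hψp' _),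
    smul_apply, smul_eq_mul, timeDeriv_eq_fderiv hψp, spaceDeriv_eq_fderiv _ (hψp' _),
    ← Finset.mul_sum]
  ring

theorem firstVariation_integrand_eq {η : ℝ × (Fin 3 → ℝ) → ℝ} (hη : Differentiable ℝ η)
    (p : ℝ × (Fin 3 → ℝ)) :
    α / 2 * (timeDeriv ψ p * η p - ψ p * timeDeriv (fun q => (η q : ℂ)) p)
        - κ * ∑ k, spaceDeriv k ψ p * spaceDeriv k (fun q => (η q : ℂ)) p - W p * ψ p * η p
      = η p • (α / 2 * timeDeriv ψ p - W p * ψ p)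
        + ∑ i, fderiv ℝ η p (coordDirection i) • conjMomentum α κ ψ i p := by
  have hηp : DifferentiableAt ℝ (fun q => (η q : ℂ)) p :=
    Complex.ofRealCLM.differentiableAt.comp p (hη p)
  simp only [timeDeriv_eq_fderiv hηp, spaceDeriv_eq_fderiv _ hηp, fderiv_ofReal_apply (hη p),
    Fintype.sum_option, conjMomentum, Complex.real_smul, Finset.mul_sum]
  simp only [Fin.sum_univ_three]
  ring

theorem schrodinger_from_variational_principle_general (hU : IsOpen U) (hW : ContinuousOn W U)
    (hψ : ContDiffOn ℝ 2 ψ U)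
    (hvar : ∀ η : ℝ × (Fin 3 → ℝ) → ℝ, ContDiff ℝ ∞ η → HasCompactSupport η → tsupport η ⊆ U →
      ∫ p, (α / 2 * (timeDeriv ψ p * η p - ψ p * timeDeriv (fun q => (η q : ℂ)) p)
        - κ * ∑ k, spaceDeriv k ψ p * spaceDeriv k (fun q => (η q : ℂ)) p
        - W p * ψ p * η p) = 0) :
    ∀ p ∈ U, α * timeDeriv ψ p = -κ * ∑ k, spaceDeriv k (spaceDeriv k ψ) p + W p * ψ p := by
  have hforce : ContinuousOn (fun p => α / 2 * timeDeriv ψ p - W p * ψ p) U :=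
    (continuousOn_const.mul (contDiffOn_timeDeriv (n := 1) hU hψ).continuousOn).sub
      (hW.mul hψ.continuousOn)
  have : (volume : Measure (ℝ × (Fin 3 → ℝ))).IsAddHaarMeasure :=
    Measure.prod.instIsAddHaarMeasure _ _
  have heulerLagrange := eqOn_sum_fderiv_of_integral_eq_zero (μ := volume) hU hforce
    (contDiffOn_conjMomentum (α := α) (κ := κ) hU hψ) coordDirection
    fun η hη hη_compact hηU => by
      simpa only [firstVariation_integrand_eq (hη.differentiable (by simp))]
        using hvar η hη hη_compact hηU
  intro p hp
  have hp_eq := heulerLagrange hp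
  simp only [sum_fderiv_conjMomentum hU hψ hp] at hp_eq
  linear_combination hp_eq

end Schrodinger

/-- Variational derivation of the linear Schrödinger equation: if the first variation of
the Schrödinger action with respect to the conjugate field vanishes for all smooth
compactly supported variations `η` with support in `I ×ˢ Ω`, then `ψ` satisfies
`ihbar·∂ₜψ = −(hbar²/(2m))·∇²ψ + V·ψ` on `I ×ˢ Ω`. -/
theorem schrodinger_from_variational_principle
    (hbar m : ℝ) (hhbar : 0 < hbar) (hm : 0 < m)
    (Ω : Set (Fin 3 → ℝ)) (hΩ : IsOpen Ω)
    (I : Set ℝ) (hI : ∃ a b : ℝ, I = Set.Ioo a b)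
    (V : (Fin 3 → ℝ) → ℝ) (hV : Continuous V)
    (ψ : ℝ × (Fin 3 → ℝ) → ℂ) (hψ : ContDiffOn ℝ 2 ψ (I ×ˢ Ω))
    (hvar : ∀ η : ℝ × (Fin 3 → ℝ) → ℂ, ContDiff ℝ (⊤ : ℕ∞) η → HasCompactSupport η →
      tsupport η ⊆ I ×ˢ Ω →
      (∫ p : ℝ × (Fin 3 → ℝ),
        ((Complex.I * (hbar : ℂ)) / 2) *
            (timeDeriv ψ p * (starRingEnd ℂ) (η p)
              - ψ p * timeDeriv (fun q => (starRingEnd ℂ) (η q)) p)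
          - ((hbar : ℂ) ^ 2 / (2 * (m : ℂ))) *
              ∑ k : Fin 3,
                spaceDeriv k ψ p * spaceDeriv k (fun q => (starRingEnd ℂ) (η q)) p
          - (V p.2 : ℂ) * ψ p * (starRingEnd ℂ) (η p)) = 0) :
    ∀ p ∈ I ×ˢ Ω,
      Complex.I * (hbar : ℂ) * timeDeriv ψ p
        = -((hbar : ℂ) ^ 2 / (2 * (m : ℂ))) *
            (∑ k : Fin 3, spaceDeriv k (spaceDeriv k ψ) p) + (V p.2 : ℂ) * ψ p := by
  obtain ⟨a, b, rfl⟩ := hI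
  exact schrodinger_from_variational_principle_general (isOpen_Ioo.prod hΩ) (by fun_prop) hψ
    fun η hη hη_compact hηU => by
      simpa only [Complex.conj_ofReal] using hvar (fun p => (η p : ℂ))
        (Complex.ofRealCLM.contDiff.comp hη) (hη_compact.comp_left Complex.ofReal_zero)
        ((tsupport_comp_subset Complex.ofReal_zero η).trans hηU)
end

section
/- Let A be a real Banach algebra with unit, let ℓ : A → ℝ be Fréchet differentiable, let N ≥ 2, let g₀,…,g_N be invertible elements of A, and set f_k = g_k⁻¹·g_{k+1} for k = 0,…,N−1. Then the following are equivalent: (1) for every choice of variations ϑ₀,…,ϑ_N ∈ A with ϑ₀ = ϑ_N = 0, the first variation of the discrete action sum vanishes: ∑_{k=0}^{N−1} Dℓ(f_k)[ −ϑ_k·f_k + f_k·ϑ_{k+1} ] = 0; (2) the discrete Euler–Poincaré equations hold: for each k = 1,…,N−1 and every ϑ ∈ A, Dℓ(f_{k−1})[ f_{k−1}·ϑ ] = Dℓ(f_k)[ ϑ·f_k ]. Here Dℓ(f) denotes the Fréchet derivative of ℓ at f, a continuous linear functional on A. -/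
/-!
Summation by parts moves the variations `ϑ₁, …, ϑ_{N-1}` to a common index, the boundary terms
being killed by `ϑ₀ = ϑ_N = 0`. The interior variations are independent of each other, so testing
with a variation concentrated at one index isolates the coefficient there.
-/

section SummationByParts

variable {V M : Type*}

theorem sum_range_succ_neg_add_by_parts [AddCommGroup M] (u v : ℕ → M) (n : ℕ) :
    ∑ k ∈ Finset.range (n + 1), (-u k + v k) =
      -u 0 + ∑ k ∈ Finset.range n, (v k - u (k + 1)) + v n := by
  rw [Finset.sum_add_distrib, Finset.sum_neg_distrib, Finset.sum_range_succ' u,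
    Finset.sum_range_succ v, Finset.sum_sub_distrib]
  abel

theorem forall_sum_range_apply_succ_eq_zero_iff [AddZeroClass V] [AddCommMonoid M]
    (c : ℕ → V →+ M) (n : ℕ) :
    (∀ ϑ : ℕ → V, ϑ 0 = 0 → ϑ (n + 1) = 0 → ∑ k ∈ Finset.range n, c k (ϑ (k + 1)) = 0) ↔
      ∀ k < n, c k = 0 := by
  refine ⟨fun stationary j hj => AddMonoidHom.ext fun θ => ?_, fun hc ϑ _ _ => ?_⟩
  · calc
      c j θ = ∑ k ∈ Finset.range n, c k ((Pi.single (j + 1) θ : ℕ → V) (k + 1)) := by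
        rw [Finset.sum_eq_single_of_mem j (Finset.mem_range.mpr hj), Pi.single_eq_same]
        intro k _ hkj
        rw [Pi.single_eq_of_ne (by lia), map_zero]
      _ = 0 := stationary _ (Pi.single_eq_of_ne (by lia) _) (Pi.single_eq_of_ne (by lia) _)
  · refine Finset.sum_eq_zero fun k hk => ?_
    rw [hc k (Finset.mem_range.mp hk), AddMonoidHom.zero_apply]

theorem forall_sum_range_neg_add_eq_zero_iff [AddZeroClass V] [AddCommGroup M]
    (a b : ℕ → V →+ M) (n : ℕ) :
    (∀ ϑ : ℕ → V, ϑ 0 = 0 → ϑ (n + 1) = 0 →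
        ∑ k ∈ Finset.range (n + 1), (-a k (ϑ k) + b k (ϑ (k + 1))) = 0) ↔
      ∀ k < n, b k = a (k + 1) := by
  have sum_eq (ϑ : ℕ → V) (hϑ₀ : ϑ 0 = 0) (hϑ₁ : ϑ (n + 1) = 0) :
      ∑ k ∈ Finset.range (n + 1), (-a k (ϑ k) + b k (ϑ (k + 1))) =
        ∑ k ∈ Finset.range n, (b k - a (k + 1)) (ϑ (k + 1)) := by
    rw [sum_range_succ_neg_add_by_parts (fun k => a k (ϑ k))]
    simp only [hϑ₀, hϑ₁, map_zero, neg_zero, zero_add, add_zero, AddMonoidHom.sub_apply]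
  calc
    _ ↔ ∀ ϑ : ℕ → V, ϑ 0 = 0 → ϑ (n + 1) = 0 →
          ∑ k ∈ Finset.range n, (b k - a (k + 1)) (ϑ (k + 1)) = 0 :=
      forall₃_congr fun ϑ hϑ₀ hϑ₁ => by rw [sum_eq ϑ hϑ₀ hϑ₁]
    _ ↔ ∀ k < n, b k - a (k + 1) = 0 := forall_sum_range_apply_succ_eq_zero_iff _ n
    _ ↔ ∀ k < n, b k = a (k + 1) := by simp only [sub_eq_zero]

end SummationByParts

theorem discrete_euler_poincare_general {A M : Type*} [NonUnitalNonAssocRing A] [AddCommGroup M]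
    (D : ℕ → A →+ M) (f : ℕ → A) (N : ℕ) :
    (∀ ϑ : ℕ → A, ϑ 0 = 0 → ϑ N = 0 →
        ∑ k ∈ Finset.range N, D k (-(ϑ k * f k) + f k * ϑ (k + 1)) = 0) ↔
      ∀ k, 1 ≤ k → k ≤ N - 1 → ∀ ϑ : A,
        D (k - 1) (f (k - 1) * ϑ) = D k (ϑ * f k) := by
  obtain _ | n := N
  · exact iff_of_true (fun _ _ _ => Finset.sum_range_zero _) (by lia)
  have interior := forall_sum_range_neg_add_eq_zero_iff
    (fun k => (D k).comp (AddMonoidHom.mulRight (f k)))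
    (fun k => (D k).comp (AddMonoidHom.mulLeft (f k))) n
  simp only [DFunLike.ext_iff, AddMonoidHom.comp_apply, AddMonoidHom.mulRight_apply,
    AddMonoidHom.coe_mulLeft, ← map_neg, ← map_add] at interior
  refine interior.trans ⟨fun h k hk hkn => ?_, fun h k hk => h (k + 1) (by lia) (by lia)⟩
  obtain ⟨j, rfl⟩ := Nat.exists_eq_add_of_le' hk
  exact h j (by lia)

/-- Discrete Euler–Poincaré equations: for a Fréchet differentiable reduced discrete
Lagrangian `ℓ` on a real Banach algebra `A`, with `f_k = g_k⁻¹·g_{k+1}`, the first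
variation of the discrete action sum `∑_{k<N} ℓ(f_k)` vanishes for all variations
`ϑ₀, …, ϑ_N` with `ϑ₀ = ϑ_N = 0` (where `δf_k = −ϑ_k·f_k + f_k·ϑ_{k+1}`) if and only if
the discrete Euler–Poincaré equations
`Dℓ(f_{k−1})[f_{k−1}·ϑ] = Dℓ(f_k)[ϑ·f_k]` hold for `k = 1, …, N−1` and all `ϑ`. -/
theorem discrete_euler_poincare
    {A : Type*} [NormedRing A] [NormedAlgebra ℝ A]
    (ℓ : A → ℝ) (hℓ : Differentiable ℝ ℓ)
    (N : ℕ) (hN : 2 ≤ N)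
    (g : ℕ → A) (hg : ∀ k, k ≤ N → IsUnit (g k)) :
    let f : ℕ → A := fun k => Ring.inverse (g k) * g (k + 1)
    ((∀ ϑ : ℕ → A, ϑ 0 = 0 → ϑ N = 0 →
        ∑ k ∈ Finset.range N, fderiv ℝ ℓ (f k) (-(ϑ k * f k) + f k * ϑ (k + 1)) = 0) ↔
      (∀ k, 1 ≤ k → k ≤ N - 1 → ∀ ϑ : A,
        fderiv ℝ ℓ (f (k - 1)) (f (k - 1) * ϑ) = fderiv ℝ ℓ (f k) (ϑ * f k))) := by
  intro f
  exact discrete_euler_poincare_general (fun k => (fderiv ℝ ℓ (f k) : A →+ ℝ)) f N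
end
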